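/- arXiv:2410.02418 — 2 statements merged into one kernel-verified Lean document; each statement's English description precedes it below -/
import Mathlib

section
/- Let N ∈ ℕ, N ≥ 4, β = i − 1 and D = {0, 1, −1, i, −i}. There are exactly 16 distinct Gaussian integers x ∈ ℤ[i] not divisible by β such that x has a 3-NAF (β, D)-representation containing exactly N nonzero digits and x has exactly r_N optimal representations, where (r_N) is defined by r_0 = r_1 = 1, r_2 = 3, r_3 = 8, r_4 = 17 and r_{N+3} = r_{N+2} + 2 r_{N+1} + 2 r_N for N ≥ 2. -/
/-!
Splitting the representations of `x ≢ 0 (mod β)` by their last digit turns the count for weight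
`n + 1` into four counts for weight `n`. The same recursion bounds weights from below: a nonzero
digit put two zeros below `x` raises the minimal weight by one. Hence 3-NAFs are optimal, and the
number of optimal representations of a 3-NAF follows from its digits: if `s` counts the optimal
representations of `x` with last digit `u`, `iu`, `-u`, `-iu`, where `u` is the last digit of the
3-NAF of `x`, then prepending a digit `i ^ j * u` replaces `s` by a linear function of `s` that
depends only on `j` and on whether the gap has two, three or more zeros.

With a gap of two zeros, the ratios `-1` and `-i` give the totals `3 s₀ + s₁ + s₂ + 3 s₃` and
`3 s₀ + 3 s₁ + s₂ + s₃`. If the weight `N` is at least 4, then `∑ s ≤ r_N`, `s₀ ≤ r_{N-1}` and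
`s₁, s₃ ≤ r_{N-2}`, so both totals are at most `r_N + 2 r_{N-1} + 2 r_{N-2} = r_{N+1}`, and every
other step stays strictly below. When `∑ s = r_N`, exactly one of `s₁`, `s₃` reaches `r_{N-2}`, so
each maximizer of weight `N` extends to exactly one of weight `N + 1`, with the same ratio at
every step. There are 4 maximal patterns at weight 4, and the leading digit is one of the 4 units.
-/

open Matrix

noncomputable section

/-- The imaginary unit `i` in the Gaussian integers. -/
def gI : GaussianInt := ⟨0, 1⟩

/-- The base `β = i - 1`. -/
def gβ : GaussianInt := ⟨-1, 1⟩

/-- The digit set `D = {0, 1, -1, i, -i}`. -/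
def gD : Set GaussianInt := {0, 1, -1, gI, -gI}

/-- Value of a digit string `d_{n-1} ⋯ d_0`, given as a list with the least
significant digit first: `gval [d_0, d_1, …, d_{n-1}] = Σ d_j β^j`. -/
def gval (l : List GaussianInt) : GaussianInt :=
  l.foldr (fun d acc => d + gβ * acc) 0

/-- `l` (least significant digit first) is a `(β, D)`-representation of `x`. -/
def gIsRep (x : GaussianInt) (l : List GaussianInt) : Prop :=
  (∀ d ∈ l, d ∈ gD) ∧ gval l = x

/-- A representation is normalized if it is empty or its leading digit
(the last entry of the LSD-first list) is nonzero. -/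
def gNormalized (l : List GaussianInt) : Prop := l.getLast? ≠ some 0

/-- Number of nonzero digits (Hamming weight). -/
def gweight (l : List GaussianInt) : ℕ := (l.filter (fun d => d ≠ 0)).length

/-- `W`-NAF property: among any `W` consecutive digits at most one is nonzero. -/
def gNAF (W : ℕ) (l : List GaussianInt) : Prop :=
  ∀ j k : ℕ, j < k → k < j + W → l.getD j 0 ≠ 0 → l.getD k 0 = 0

/-- A representation of `x` is optimal if it is normalized and its number of
nonzero digits is minimal among all representations of `x`. -/
def gOptimal (x : GaussianInt) (l : List GaussianInt) : Prop :=
  gIsRep x l ∧ gNormalized l ∧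
    ∀ l' : List GaussianInt, gIsRep x l' → gweight l ≤ gweight l'

/-- The number of optimal representations of `x`. -/
def gnumOpt (x : GaussianInt) : ℕ := Nat.card {l : List GaussianInt // gOptimal x l}

/-- The sequence `r_N`: `r_0 = r_1 = 1`, `r_2 = 3`, `r_3 = 8`, `r_4 = 17`,
and `r_{N+3} = r_{N+2} + 2 r_{N+1} + 2 r_N` for `N ≥ 2`. -/
def rseq : ℕ → ℕ
  | 0 => 1
  | 1 => 1
  | 2 => 3
  | 3 => 8
  | 4 => 17
  | (n + 5) => rseq (n + 4) + 2 * rseq (n + 3) + 2 * rseq (n + 2)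

/-! ### The units and the prime `β` -/

lemma gI_mul_gI : gI * gI = -1 := by
  simp [gI, Zsqrtd.ext_iff]

lemma gβ_eq : gβ = gI - 1 := by
  simp [gI, gβ, Zsqrtd.ext_iff]

lemma gβ_ne_zero : gβ ≠ 0 := by
  simp [gβ, Zsqrtd.ext_iff]

lemma isUnit_gI : IsUnit gI :=
  IsUnit.of_mul_eq_one (-gI) (by rw [mul_neg, gI_mul_gI, neg_neg])

lemma isUnit_gI_pow_mul {u : GaussianInt} (hu : IsUnit u) (j : ℕ) : IsUnit (gI ^ j * u) :=
  (isUnit_gI.pow j).mul hu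

lemma isUnit_iff_exists_gI_pow {v : GaussianInt} : IsUnit v ↔ ∃ j : Fin 4, v = gI ^ (j : ℕ) := by
  refine ⟨fun hv => ?_, fun ⟨j, hj⟩ => hj ▸ isUnit_gI.pow _⟩
  have hnorm : v.re * v.re + v.im * v.im = 1 := by
    simpa [Zsqrtd.norm_def] using (Zsqrtd.norm_eq_one_iff' (by norm_num) v).2 hv
  have hre : -1 ≤ v.re ∧ v.re ≤ 1 := ⟨by nlinarith, by nlinarith⟩
  have him : -1 ≤ v.im ∧ v.im ≤ 1 := ⟨by nlinarith, by nlinarith⟩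
  obtain ⟨x, y⟩ := v
  obtain ⟨hx, hx'⟩ := hre
  obtain ⟨hy, hy'⟩ := him
  dsimp only at *
  interval_cases x <;> interval_cases y <;> first | (exfalso; omega) | decide

lemma exists_eq_gI_pow_mul {u v : GaussianInt} (hu : IsUnit u) (hv : IsUnit v) :
    ∃ j : Fin 4, v = gI ^ (j : ℕ) * u := by
  obtain ⟨w, rfl⟩ := hu
  obtain ⟨j, hj⟩ := isUnit_iff_exists_gI_pow.1 (hv.mul w⁻¹.isUnit)
  exact ⟨j, by rw [← hj, Units.inv_mul_cancel_right]⟩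

lemma gI_pow_fin_injective : Function.Injective fun j : Fin 4 => gI ^ (j : ℕ) := by
  decide

lemma gI_pow_fin_add (j k : Fin 4) : gI ^ ((j + k : Fin 4) : ℕ) = gI ^ (j : ℕ) * gI ^ (k : ℕ) := by
  revert j k; decide

lemma mem_gD_iff {d : GaussianInt} : d ∈ gD ↔ d = 0 ∨ IsUnit d := by
  rw [isUnit_iff_exists_gI_pow]
  simp [gD, Fin.exists_fin_succ, pow_succ, gI_mul_gI]
  tauto

lemma gβ_dvd_iff {x : GaussianInt} : gβ ∣ x ↔ Even (x.re + x.im) := by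
  constructor
  · rintro ⟨t, rfl⟩
    exact ⟨-t.im, by simp [gβ]; ring⟩
  · rintro ⟨k, hk⟩
    refine ⟨⟨x.im - k, -k⟩, Zsqrtd.ext ?_ ?_⟩
    · simp [gβ]; omega
    · simp [gβ]

lemma gβ_dvd_sub_of_not_dvd {x y : GaussianInt} (hx : ¬ gβ ∣ x) (hy : ¬ gβ ∣ y) :
    gβ ∣ x - y := by
  rw [gβ_dvd_iff, Int.not_even_iff_odd] at hx hy
  rw [gβ_dvd_iff, Zsqrtd.re_sub, Zsqrtd.im_sub, sub_add_sub_comm]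
  exact hx.sub_odd hy

lemma not_gβ_dvd_of_isUnit {e : GaussianInt} (he : IsUnit e) : ¬ gβ ∣ e := fun h => by
  have := isUnit_of_dvd_unit h he
  rw [← Zsqrtd.norm_eq_one_iff] at this
  simp [gβ, Zsqrtd.norm_def] at this

lemma not_gβ_dvd_unit_add {e : GaussianInt} (he : IsUnit e) (t : GaussianInt) :
    ¬ gβ ∣ e + gβ * t := by
  rw [dvd_add_left (dvd_mul_right _ _)]
  exact not_gβ_dvd_of_isUnit he

lemma unit_sub_unit {e d : GaussianInt} (he : IsUnit e) (hd : IsUnit d) :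
    e = d ∨ ∃ f, IsUnit f ∧ (e - d = f * gβ ∨ e - d = f * gβ ^ 2) := by
  obtain ⟨j, rfl⟩ := exists_eq_gI_pow_mul hd he
  have hI := gI_mul_gI
  fin_cases j
  · exact .inl (by simp)
  · exact .inr ⟨d, hd, .inl (by simp [gβ_eq]; ring)⟩
  · exact .inr ⟨-(gI * d), (isUnit_gI.mul hd).neg, .inr (by
      simp only [gβ_eq]; linear_combination (gI - 1) * d * hI)⟩
  · exact .inr ⟨gI * d, isUnit_gI.mul hd, .inl (by
      simp only [gβ_eq]; linear_combination (gI - 1) * d * hI)⟩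

lemma eq_of_gβ_pow_three_dvd_sub {e f : GaussianInt} (he : IsUnit e) (hf : IsUnit f)
    (h : gβ ^ 3 ∣ e - f) : e = f := by
  obtain h' | ⟨g, hg, h'⟩ := unit_sub_unit he hf
  · exact h'
  · have hdvd : gβ ^ 3 ∣ g * gβ ^ 2 := by
      rcases h' with h' | h'
      · rw [pow_two, ← mul_assoc, ← h']
        exact h.mul_right gβ
      · exact h' ▸ h
    rw [pow_succ', mul_dvd_mul_iff_right (pow_ne_zero 2 gβ_ne_zero)] at hdvd
    exact absurd hdvd (not_gβ_dvd_of_isUnit hg)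

/-! ### Representations by their last digit -/

lemma gβ_dvd_digit_iff {d : GaussianInt} (hd : d ∈ gD) : gβ ∣ d ↔ d = 0 := by
  refine ⟨fun h => ?_, fun h => h ▸ dvd_zero gβ⟩
  exact (mem_gD_iff.1 hd).resolve_right fun hu => not_gβ_dvd_of_isUnit hu h

lemma gval_cons (d : GaussianInt) (l : List GaussianInt) : gval (d :: l) = d + gβ * gval l := rfl

lemma gIsRep_nil {x : GaussianInt} : gIsRep x [] ↔ x = 0 := by
  simp [gIsRep, gval, eq_comm]

lemma gIsRep_cons {x d : GaussianInt} {l : List GaussianInt} :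
    gIsRep x (d :: l) ↔ d ∈ gD ∧ ∃ t, x = d + gβ * t ∧ gIsRep t l := by
  constructor
  · rintro ⟨hl, rfl⟩
    exact ⟨hl d List.mem_cons_self, gval l, rfl, fun a ha => hl a (List.mem_cons_of_mem d ha), rfl⟩
  · rintro ⟨hd, t, rfl, hl, rfl⟩
    exact ⟨List.forall_mem_cons.2 ⟨hd, hl⟩, rfl⟩

lemma gIsRep.zero_cons {x : GaussianInt} {l : List GaussianInt} (h : gIsRep x l) :
    gIsRep (gβ * x) (0 :: l) :=
  gIsRep_cons.2 ⟨mem_gD_iff.2 (.inl rfl), x, (zero_add _).symm, h⟩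

lemma gIsRep.unit_cons {x e : GaussianInt} {l : List GaussianInt} (he : IsUnit e)
    (h : gIsRep x l) : gIsRep (e + gβ * x) (e :: l) :=
  gIsRep_cons.2 ⟨mem_gD_iff.2 (.inr he), x, rfl, h⟩

lemma gIsRep.exists_of_gβ_mul {x : GaussianInt} {l : List GaussianInt}
    (h : gIsRep (gβ * x) l) : (x = 0 ∧ l = []) ∨ ∃ l', l = 0 :: l' ∧ gIsRep x l' := by
  cases l with
  | nil => exact .inl ⟨by simpa [gβ_ne_zero] using gIsRep_nil.1 h, rfl⟩
  | cons d l =>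
    obtain ⟨hd, t, ht, hl⟩ := gIsRep_cons.1 h
    have hd0 : d = 0 := by
      rw [← gβ_dvd_digit_iff hd, ← dvd_add_left (dvd_mul_right gβ t), ← ht]
      exact dvd_mul_right gβ x
    rw [hd0, zero_add, mul_right_inj' gβ_ne_zero] at ht
    exact .inr ⟨l, by rw [hd0], ht ▸ hl⟩

lemma gIsRep.exists_of_not_dvd {x : GaussianInt} {l : List GaussianInt} (hx : ¬ gβ ∣ x)
    (h : gIsRep x l) :
    ∃ d l' t, IsUnit d ∧ l = d :: l' ∧ x = d + gβ * t ∧ gIsRep t l' := by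
  cases l with
  | nil => exact absurd (gIsRep_nil.1 h ▸ dvd_zero gβ) hx
  | cons d l =>
    obtain ⟨hd, t, rfl, hl⟩ := gIsRep_cons.1 h
    refine ⟨d, l, t, (mem_gD_iff.1 hd).resolve_left ?_, rfl, rfl, hl⟩
    rintro rfl
    exact hx (by simp)

lemma gweight_zero_cons (l : List GaussianInt) : gweight (0 :: l) = gweight l := by
  simp [gweight]

lemma gweight_cons {d : GaussianInt} (hd : d ≠ 0) (l : List GaussianInt) :
    gweight (d :: l) = gweight l + 1 := by
  simp [gweight, hd]

lemma gweight_eq_zero_iff {l : List GaussianInt} : gweight l = 0 ↔ ∀ d ∈ l, d = 0 := by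
  simp [gweight]

lemma gNormalized_nil : gNormalized [] := by
  simp [gNormalized]

lemma gNormalized_cons {d : GaussianInt} (hd : d ≠ 0) {l : List GaussianInt} :
    gNormalized (d :: l) ↔ gNormalized l := by
  cases l <;> simp [gNormalized, hd]

lemma gNormalized_zero_cons {l : List GaussianInt} (hl : l ≠ []) :
    gNormalized (0 :: l) ↔ gNormalized l := by
  cases l with
  | nil => exact absurd rfl hl
  | cons a l => simp [gNormalized]

lemma gNormalized.eq_nil {l : List GaussianInt} (h : gNormalized l) (hw : gweight l = 0) :
    l = [] := by
  by_contra hl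
  rw [gNormalized, List.getLast?_eq_some_getLast hl] at h
  exact h (congrArg some (gweight_eq_zero_iff.1 hw _ (List.getLast_mem hl)))

/-! ### Counting representations of given weight -/

/-- The normalized representations of `x` with exactly `m` nonzero digits. -/
def weightReps (x : GaussianInt) (m : ℕ) : Set (List GaussianInt) :=
  {l | gIsRep x l ∧ gNormalized l ∧ gweight l = m}

/-- The number of normalized representations of `x` with exactly `m` nonzero digits, as an extended
natural number so that counting disjoint unions needs no finiteness proofs. -/
def repCount (x : GaussianInt) (m : ℕ) : ℕ∞ := (weightReps x m).encard

lemma repCount_zero_right (x : GaussianInt) : repCount x 0 = if x = 0 then 1 else 0 := by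
  have hreps : weightReps x 0 = {l | x = 0 ∧ l = []} := by
    ext l
    constructor
    · rintro ⟨hl, hn, hw⟩
      obtain rfl := hn.eq_nil hw
      exact ⟨gIsRep_nil.1 hl, rfl⟩
    · rintro ⟨rfl, rfl⟩
      exact ⟨gIsRep_nil.2 rfl, gNormalized_nil, rfl⟩
  rw [repCount, hreps]
  split_ifs with hx <;> simp [hx]

lemma zero_cons_mem_weightReps {x : GaussianInt} (hx : x ≠ 0) {l : List GaussianInt} {m : ℕ} :
    0 :: l ∈ weightReps (gβ * x) m ↔ l ∈ weightReps x m := by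
  have hrep : gIsRep (gβ * x) (0 :: l) ↔ gIsRep x l := by
    simp [gIsRep_cons, mem_gD_iff, gβ_ne_zero]
  rcases eq_or_ne l [] with rfl | hl
  · simp [weightReps, hrep, gIsRep_nil, hx]
  · simp only [weightReps, Set.mem_ofPred_eq, hrep, gNormalized_zero_cons hl, gweight_zero_cons]

lemma unit_cons_mem_weightReps {e t : GaussianInt} (he : IsUnit e) {l : List GaussianInt} {m : ℕ} :
    e :: l ∈ weightReps (e + gβ * t) (m + 1) ↔ l ∈ weightReps t m := by
  simp only [weightReps, Set.mem_ofPred_eq, gIsRep_cons, mem_gD_iff, he, or_true, true_and,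
    add_right_inj, mul_right_inj' gβ_ne_zero, exists_eq_left', gNormalized_cons he.ne_zero,
    gweight_cons he.ne_zero, add_left_inj]

lemma repCount_gβ_mul (x : GaussianInt) (m : ℕ) : repCount (gβ * x) m = repCount x m := by
  rcases eq_or_ne x 0 with rfl | hx
  · rw [mul_zero]
  have himage : weightReps (gβ * x) m = List.cons 0 '' weightReps x m := by
    ext l
    constructor
    · intro hl
      obtain ⟨hx0, -⟩ | ⟨l, rfl, -⟩ := hl.1.exists_of_gβ_mul
      · exact absurd hx0 hx
      · exact ⟨l, (zero_cons_mem_weightReps hx).1 hl, rfl⟩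
    · rintro ⟨l, hl, rfl⟩
      exact (zero_cons_mem_weightReps hx).2 hl
  rw [repCount, himage, List.cons_injective.encard_image, repCount]

lemma repCount_gβ_pow_mul (k : ℕ) (x : GaussianInt) (m : ℕ) :
    repCount (gβ ^ k * x) m = repCount x m := by
  induction k with
  | zero => rw [pow_zero, one_mul]
  | succ k ih => rw [pow_succ', mul_assoc, repCount_gβ_mul, ih]

theorem repCount_succ {x u : GaussianInt} (hx : ¬ gβ ∣ x) (hu : IsUnit u) (m : ℕ) :
    repCount x (m + 1) = ∑ j : Fin 4, repCount (x - gI ^ (j : ℕ) * u) m := by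
  have hunit (j : Fin 4) : IsUnit (gI ^ (j : ℕ) * u) := isUnit_gI_pow_mul hu j
  choose t ht using fun j : Fin 4 => gβ_dvd_sub_of_not_dvd hx (not_gβ_dvd_of_isUnit (hunit j))
  have hxt (j : Fin 4) : x = gI ^ (j : ℕ) * u + gβ * t j := by rw [← ht, add_sub_cancel]
  have hunion : weightReps x (m + 1) =
      ⋃ j : Fin 4, List.cons (gI ^ (j : ℕ) * u) '' weightReps (t j) m := by
    ext l
    rw [Set.mem_iUnion]
    constructor
    · intro hl
      obtain ⟨d, l, -, hd, rfl, -, -⟩ := hl.1.exists_of_not_dvd hx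
      obtain ⟨j, rfl⟩ := exists_eq_gI_pow_mul hu hd
      rw [hxt j, unit_cons_mem_weightReps (hunit j)] at hl
      exact ⟨j, l, hl, rfl⟩
    · rintro ⟨j, l, hl, rfl⟩
      rw [hxt j]
      exact (unit_cons_mem_weightReps (hunit j)).2 hl
  have hdisjoint : Pairwise fun i j : Fin 4 =>
      Disjoint (List.cons (gI ^ (i : ℕ) * u) '' weightReps (t i) m)
        (List.cons (gI ^ (j : ℕ) * u) '' weightReps (t j) m) := by
    intro i j hij
    rw [Set.disjoint_left]
    rintro _ ⟨l, -, rfl⟩ ⟨l', -, h⟩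
    exact hij (gI_pow_fin_injective (mul_right_cancel₀ hu.ne_zero (List.cons.inj h).1).symm)
  rw [repCount, hunion, Set.encard_iUnion_of_finite hdisjoint, finsum_eq_sum_of_fintype]
  refine Finset.sum_congr rfl fun j _ => ?_
  rw [List.cons_injective.encard_image, ht, repCount_gβ_mul, repCount]

/-! ### Lower bounds for the weight -/

/-- Every representation of `x` has at least `n` nonzero digits. -/
def WeightGE (x : GaussianInt) (n : ℕ) : Prop := ∀ l, gIsRep x l → n ≤ gweight l

lemma weightGE_zero (x : GaussianInt) : WeightGE x 0 := fun l _ => Nat.zero_le (gweight l)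

lemma WeightGE.mono {x : GaussianInt} {m n : ℕ} (h : WeightGE x n) (hmn : m ≤ n) : WeightGE x m :=
  fun l hl => hmn.trans (h l hl)

lemma WeightGE.repCount_eq_zero {x : GaussianInt} {m n : ℕ} (h : WeightGE x n) (hmn : m < n) :
    repCount x m = 0 := by
  rw [repCount, Set.encard_eq_zero, Set.eq_empty_iff_forall_notMem]
  rintro l ⟨hl, -, rfl⟩
  exact (h l hl).not_gt hmn

lemma WeightGE.ne_zero {x : GaussianInt} {n : ℕ} (h : WeightGE x (n + 1)) : x ≠ 0 := by
  rintro rfl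
  exact Nat.not_succ_le_zero n (h [] (gIsRep_nil.2 rfl))

lemma weightGE_gβ_mul {x : GaussianInt} {n : ℕ} : WeightGE (gβ * x) n ↔ WeightGE x n := by
  constructor <;> intro h l hl
  · exact gweight_zero_cons l ▸ h (0 :: l) hl.zero_cons
  · obtain ⟨rfl, rfl⟩ | ⟨l', rfl, hl'⟩ := hl.exists_of_gβ_mul
    · exact h [] (gIsRep_nil.2 rfl)
    · exact gweight_zero_cons l' ▸ h l' hl'

lemma weightGE_gβ_pow_mul {k : ℕ} {x : GaussianInt} {n : ℕ} :
    WeightGE (gβ ^ k * x) n ↔ WeightGE x n := by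
  induction k with
  | zero => rw [pow_zero, one_mul]
  | succ k ih => rw [pow_succ', mul_assoc, weightGE_gβ_mul, ih]

lemma weightGE_succ_iff {x : GaussianInt} {n : ℕ} (hx : ¬ gβ ∣ x) :
    WeightGE x (n + 1) ↔ ∀ d, IsUnit d → WeightGE (x - d) n := by
  constructor
  · intro h d hd
    obtain ⟨t, ht⟩ := gβ_dvd_sub_of_not_dvd hx (not_gβ_dvd_of_isUnit hd)
    obtain rfl : x = d + gβ * t := eq_add_of_sub_eq' ht
    rw [add_sub_cancel_left, weightGE_gβ_mul]
    intro l hl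
    have := h (d :: l) (hl.unit_cons hd)
    rwa [gweight_cons hd.ne_zero, Nat.add_le_add_iff_right] at this
  · intro h l hl
    obtain ⟨d, l', t, hd, rfl, rfl, hl'⟩ := hl.exists_of_not_dvd hx
    have ht := h d hd
    rw [add_sub_cancel_left, weightGE_gβ_mul] at ht
    rw [gweight_cons hd.ne_zero, Nat.add_le_add_iff_right]
    exact ht l' hl'

lemma WeightGE.unit_add_succ {y e : GaussianInt} {n : ℕ} (hy : WeightGE y n) (he : IsUnit e)
    (hzero : ∀ f, IsUnit f → WeightGE (y + f) n) (hone : ∀ f, IsUnit f → WeightGE (y + f * gβ) n) :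
    WeightGE (e + gβ * y) (n + 1) := by
  rw [weightGE_succ_iff (not_gβ_dvd_unit_add he y)]
  intro d hd
  have hsplit : e + gβ * y - d = gβ * y + (e - d) := by ring
  rw [hsplit]
  obtain rfl | ⟨f, hf, h | h⟩ := unit_sub_unit he hd
  · rw [sub_self, add_zero, weightGE_gβ_mul]
    exact hy
  · rw [h, show gβ * y + f * gβ = gβ * (y + f) by ring, weightGE_gβ_mul]
    exact hzero f hf
  · rw [h, show gβ * y + f * gβ ^ 2 = gβ * (y + f * gβ) by ring, weightGE_gβ_mul]
    exact hone f hf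

lemma WeightGE.add_unit_mul_gβ_pow {y e : GaussianInt} {n : ℕ} (hy : WeightGE y (n + 1))
    (he : IsUnit e) (k : ℕ) : WeightGE (y + e * gβ ^ k) n := by
  induction n generalizing y e k with
  | zero => exact weightGE_zero _
  | succ n ih =>
    induction k generalizing y with
    | zero =>
      rw [pow_zero, mul_one]
      by_cases hdvd : gβ ∣ y
      · obtain ⟨t, rfl⟩ := hdvd
        rw [weightGE_gβ_mul] at hy
        have ht : WeightGE t (n + 1) := hy.mono (n + 1).le_succ
        rw [add_comm]
        exact (ht.mono n.le_succ).unit_add_succ he (fun f hf => by simpa using ih ht hf 0)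
          fun f hf => by simpa using ih ht hf 1
      · simpa only [sub_neg_eq_add] using (weightGE_succ_iff hdvd).1 hy (-e) he.neg
    | succ k ihk =>
      by_cases hdvd : gβ ∣ y
      · obtain ⟨t, rfl⟩ := hdvd
        rw [show gβ * t + e * gβ ^ (k + 1) = gβ * (t + e * gβ ^ k) by ring, weightGE_gβ_mul]
        exact ihk (weightGE_gβ_mul.1 hy)
      · have hdvd' : ¬ gβ ∣ y + e * gβ ^ (k + 1) := by
          rwa [dvd_add_left ((dvd_pow_self gβ k.succ_ne_zero).mul_left e)]
        rw [weightGE_succ_iff hdvd']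
        intro d hd
        rw [add_sub_right_comm]
        exact ih ((weightGE_succ_iff hdvd).1 hy d hd) he (k + 1)

lemma WeightGE.unit_add {y e : GaussianInt} {n : ℕ} (hy : WeightGE y n) (he : IsUnit e) :
    WeightGE (e + gβ * y) n := by
  cases n with
  | zero => exact weightGE_zero _
  | succ n =>
    exact (hy.mono n.le_succ).unit_add_succ he
      (fun f hf => by simpa using hy.add_unit_mul_gβ_pow hf 0)
      fun f hf => by simpa using hy.add_unit_mul_gβ_pow hf 1

lemma WeightGE.unit_add_gβ_pow_three_mul {z v : GaussianInt} {n : ℕ} (hz : WeightGE z (n + 1))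
    (hv : IsUnit v) : WeightGE (v + gβ ^ 3 * z) (n + 2) := by
  rw [show v + gβ ^ 3 * z = v + gβ * (gβ ^ 2 * z) by ring]
  refine (weightGE_gβ_pow_mul.2 hz).unit_add_succ hv (fun f hf => ?_) fun f hf => ?_
  · rw [show gβ ^ 2 * z + f = f + gβ * (gβ * z) by ring]
    exact (weightGE_gβ_mul.2 hz).unit_add hf
  · rw [show gβ ^ 2 * z + f * gβ = gβ * (f + gβ * z) by ring, weightGE_gβ_mul]
    exact hz.unit_add hf

lemma gnumOpt_eq_repCount {x : GaussianInt} {l : List GaussianInt} (hx : WeightGE x (gweight l))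
    (hl : gIsRep x l) : gnumOpt x = (repCount x (gweight l)).toNat := by
  have hopt : {l' | gOptimal x l'} = weightReps x (gweight l) := by
    ext l'
    constructor
    · rintro ⟨hrep, hnorm, hmin⟩
      exact ⟨hrep, hnorm, (hmin l hl).antisymm (hx l' hrep)⟩
    · rintro ⟨hrep, hnorm, hw⟩
      exact ⟨hrep, hnorm, fun l'' hl'' => hw ▸ hx l'' hl''⟩
  exact congrArg Set.ncard hopt

/-! ### Carries -/

section Carry

variable {y z e v w : GaussianInt} {n : ℕ}

lemma repCount_unit_add_eq_zero (hy : WeightGE y (n + 1)) (he : IsUnit e) :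
    repCount (e + gβ * y) n = 0 :=
  (hy.unit_add he).repCount_eq_zero n.lt_succ_self

lemma repCount_unit_add_gβ_mul (hy : WeightGE y (n + 1)) (he : IsUnit e) :
    repCount (e + gβ * y) (n + 1) =
      repCount (y - e) n + repCount (y - gI * e) n + repCount (y + gI * gβ * e) n := by
  have hI := gI_mul_gI
  have h0 : e + gβ * y - gI ^ 0 * e = gβ * y := by ring
  have h1 : e + gβ * y - gI ^ 1 * e = gβ * (y - e) := by rw [gβ_eq]; ring
  have h2 : e + gβ * y - gI ^ 2 * e = gβ * (y + gI * gβ * e) := by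
    rw [gβ_eq]; linear_combination (-e * gI + e) * hI
  have h3 : e + gβ * y - gI ^ 3 * e = gβ * (y - gI * e) := by
    rw [gβ_eq]; linear_combination (-e * gI + e) * hI
  rw [repCount_succ (not_gβ_dvd_unit_add he y) he, Fin.sum_univ_four]
  simp only [Fin.coe_ofNat_eq_mod, Nat.zero_mod, Nat.one_mod, Nat.reduceMod, h0, h1, h2, h3,
    repCount_gβ_mul, hy.repCount_eq_zero n.lt_succ_self]
  ring

lemma repCount_unit_add_gβ_sq_mul (hy : WeightGE y (n + 1)) (he : IsUnit e) :
    repCount (e + gβ ^ 2 * y) (n + 1) = repCount (y + gI * e) n := by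
  have hzero {f : GaussianInt} (hf : IsUnit f) : repCount (gβ * y - f) n = 0 := by
    rw [sub_eq_neg_add]
    exact repCount_unit_add_eq_zero hy hf.neg
  rw [pow_two, mul_assoc, repCount_unit_add_gβ_mul (weightGE_gβ_mul.2 hy) he, hzero he,
    hzero (isUnit_gI.mul he), zero_add, zero_add,
    show gβ * y + gI * gβ * e = gβ * (y + gI * e) by ring, repCount_gβ_mul]

lemma repCount_sub_unit (hz : WeightGE z (n + 1)) (hv : IsUnit v) (j : Fin 4) :
    repCount (v + gβ ^ 3 * z - gI ^ (j : ℕ) * v) (n + 1) =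
      ![repCount z (n + 1), repCount (z - gI * v) n,
        repCount (z - gI * v) n + repCount (z + v) n + repCount (z - gβ * v) n,
        repCount (z + v) n] j := by
  have hI := gI_mul_gI
  fin_cases j
  · change repCount (v + gβ ^ 3 * z - gI ^ 0 * v) (n + 1) = repCount z (n + 1)
    rw [show v + gβ ^ 3 * z - gI ^ 0 * v = gβ ^ 3 * z by ring, repCount_gβ_pow_mul]
  · change repCount (v + gβ ^ 3 * z - gI ^ 1 * v) (n + 1) = repCount (z - gI * v) n
    have h : v + gβ ^ 3 * z - gI ^ 1 * v = gβ * (-v + gβ ^ 2 * z) := by rw [gβ_eq]; ring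
    rw [h, repCount_gβ_mul, repCount_unit_add_gβ_sq_mul hz hv.neg, mul_neg, ← sub_eq_add_neg]
  · change repCount (v + gβ ^ 3 * z - gI ^ 2 * v) (n + 1) =
      repCount (z - gI * v) n + repCount (z + v) n + repCount (z - gβ * v) n
    have h : v + gβ ^ 3 * z - gI ^ 2 * v = gβ ^ 2 * (gI * v + gβ * z) := by
      rw [gβ_eq]; linear_combination (v - gI * v) * hI
    have h1 : z - gI * (gI * v) = z + v := by linear_combination -v * hI
    have h2 : z + gI * gβ * (gI * v) = z - gβ * v := by linear_combination gβ * v * hI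
    rw [h, repCount_gβ_pow_mul, repCount_unit_add_gβ_mul hz (isUnit_gI.mul hv), h1, h2]
  · change repCount (v + gβ ^ 3 * z - gI ^ 3 * v) (n + 1) = repCount (z + v) n
    have h : v + gβ ^ 3 * z - gI ^ 3 * v = gβ * (-(gI * v) + gβ ^ 2 * z) := by
      rw [gβ_eq]; linear_combination (v - gI * v) * hI
    have h' : z + gI * -(gI * v) = z + v := by linear_combination -v * hI
    rw [h, repCount_gβ_mul, repCount_unit_add_gβ_sq_mul hz (isUnit_gI.mul hv).neg, h']

lemma repCount_sub_gβ_mul (hz : WeightGE z (n + 1)) (hv : IsUnit v) (hw : IsUnit w) :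
    repCount (v + gβ ^ 3 * z - gβ * w) (n + 1) =
      repCount (gβ ^ 2 * z - w - v) n + repCount (gβ ^ 2 * z - w - gI * v) n := by
  have hy : WeightGE (-w + gβ * (gβ * z)) (n + 1) := (weightGE_gβ_mul.2 hz).unit_add hw.neg
  have hzero : repCount (-w + gβ * (gI * v + gβ * z)) n = 0 :=
    repCount_unit_add_eq_zero (hz.unit_add (isUnit_gI.mul hv)) hw.neg
  have h : -w + gβ * (gβ * z) = gβ ^ 2 * z - w := by ring
  have h' : gβ ^ 2 * z - w + gI * gβ * v = -w + gβ * (gI * v + gβ * z) := by ring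
  rw [show v + gβ ^ 3 * z - gβ * w = v + gβ * (-w + gβ * (gβ * z)) by ring,
    repCount_unit_add_gβ_mul hy hv, h, h', hzero, add_zero]

lemma repCount_sub_gβ_mul_unit (hz : WeightGE z (n + 1)) (hv : IsUnit v) (j : Fin 4) :
    repCount (v + gβ ^ 3 * z - gβ * (gI ^ (j : ℕ) * v)) (n + 1) =
      ![repCount (z - gI * v) n, repCount (z + v) n, 0, 0] j := by
  have hI := gI_mul_gI
  have hzero {f : GaussianInt} (hf : IsUnit f) : repCount (gβ * (f + gβ * z)) n = 0 := by
    rw [repCount_gβ_mul, repCount_unit_add_eq_zero hz hf]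
  have hz0 : repCount (gβ ^ 2 * z) n = 0 := by
    rw [repCount_gβ_pow_mul, hz.repCount_eq_zero n.lt_succ_self]
  rw [repCount_sub_gβ_mul hz hv (isUnit_gI_pow_mul hv j)]
  fin_cases j
  · change repCount (gβ ^ 2 * z - gI ^ 0 * v - v) n +
      repCount (gβ ^ 2 * z - gI ^ 0 * v - gI * v) n = repCount (z - gI * v) n
    have h1 : gβ ^ 2 * z - gI ^ 0 * v - v = gβ ^ 2 * (z - gI * v) := by
      rw [gβ_eq]; linear_combination (gI * v - 2 * v) * hI
    have h2 : gβ ^ 2 * z - gI ^ 0 * v - gI * v = gβ * (gI * v + gβ * z) := by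
      rw [gβ_eq]; linear_combination -v * hI
    rw [h1, h2, repCount_gβ_pow_mul, hzero (isUnit_gI.mul hv), add_zero]
  · change repCount (gβ ^ 2 * z - gI ^ 1 * v - v) n +
      repCount (gβ ^ 2 * z - gI ^ 1 * v - gI * v) n = repCount (z + v) n
    have h1 : gβ ^ 2 * z - gI ^ 1 * v - v = gβ * (gI * v + gβ * z) := by
      rw [gβ_eq]; linear_combination -v * hI
    have h2 : gβ ^ 2 * z - gI ^ 1 * v - gI * v = gβ ^ 2 * (z + v) := by
      rw [gβ_eq]; linear_combination -v * hI
    rw [h1, h2, repCount_gβ_pow_mul, hzero (isUnit_gI.mul hv), zero_add]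
  · change repCount (gβ ^ 2 * z - gI ^ 2 * v - v) n +
      repCount (gβ ^ 2 * z - gI ^ 2 * v - gI * v) n = 0
    have h1 : gβ ^ 2 * z - gI ^ 2 * v - v = gβ ^ 2 * z := by linear_combination -v * hI
    have h2 : gβ ^ 2 * z - gI ^ 2 * v - gI * v = gβ * (-v + gβ * z) := by
      rw [gβ_eq]; linear_combination -v * hI
    rw [h1, h2, hz0, hzero hv.neg, add_zero]
  · change repCount (gβ ^ 2 * z - gI ^ 3 * v - v) n +
      repCount (gβ ^ 2 * z - gI ^ 3 * v - gI * v) n = 0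
    have h1 : gβ ^ 2 * z - gI ^ 3 * v - v = gβ * (v + gβ * z) := by
      rw [gβ_eq]; linear_combination -gI * v * hI
    have h2 : gβ ^ 2 * z - gI ^ 3 * v - gI * v = gβ ^ 2 * z := by linear_combination -gI * v * hI
    rw [h1, h2, hz0, hzero hv, add_zero]

end Carry

/-! ### Counts by last digit -/

/-- The numbers of optimal representations of `v + β³z` with last digit `v`, `iv`, `-v`, `-iv`,
where `a` is the number of optimal representations of `z`, and `b`, `c`, `d` are the numbers of
representations of `z - iv`, `z + v`, `z - βv` with one nonzero digit less. -/
def carryCounts (a b c d : ℕ) : Fin 4 → ℕ := ![a, b, b + c + d, c]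

/-- If `s` counts the optimal representations of `x` with last digit `u`, `iu`, `-u`, `-iu`, then
`secondCounts s` counts the representations of `x - βu`, `x - iβu`, `x + βu`, `x + iβu` with one
nonzero digit less. -/
def secondCounts (s : Fin 4 → ℕ) : Fin 4 → ℕ := ![s 1, s 3, 0, 0]

/-- The counts after prepending to `x` the nonzero digit `i ^ j` times its last digit, separated by
`k + 2` zeros. -/
def stepCounts : ℕ × Fin 4 → (Fin 4 → ℕ) → Fin 4 → ℕ
  | (0, j), s => carryCounts (∑ i, s i) (s (j + 1)) (s (j + 2)) (secondCounts s j)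
  | (1, j), s => carryCounts (∑ i, s i) 0 0 (s j)
  | (_ + 2, _), s => carryCounts (∑ i, s i) 0 0 0

/-- `x` has minimal weight `n + 1`, and `s j` is the number of its representations of weight `n + 1`
with last digit `i ^ j * u`. The last field closes the induction: such differences appear when a
carry reaches the second digit of `x`. -/
structure LastDigitCounts (n : ℕ) (u x : GaussianInt) (s : Fin 4 → ℕ) : Prop where
  isUnit : IsUnit u
  not_dvd : ¬ gβ ∣ x
  weightGE : WeightGE x (n + 1)
  sub_unit (j : Fin 4) : repCount (x - gI ^ (j : ℕ) * u) n = s j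
  sub_gβ_mul_unit (j : Fin 4) : repCount (x - gβ * (gI ^ (j : ℕ) * u)) n = secondCounts s j

namespace LastDigitCounts

variable {n : ℕ} {u x z v : GaussianInt} {s : Fin 4 → ℕ}

lemma repCount_eq (h : LastDigitCounts n u x s) : repCount x (n + 1) = ∑ j, s j := by
  rw [repCount_succ h.not_dvd h.isUnit, Nat.cast_sum]
  exact Finset.sum_congr rfl fun j _ => h.sub_unit j

lemma of_isUnit (hu : IsUnit u) : LastDigitCounts 0 u u ![1, 0, 0, 0] where
  isUnit := hu
  not_dvd := not_gβ_dvd_of_isUnit hu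
  weightGE := (weightGE_succ_iff (not_gβ_dvd_of_isUnit hu)).2 fun _ _ => weightGE_zero _
  sub_unit j := by
    have hiff : u - gI ^ (j : ℕ) * u = 0 ↔ j = 0 := by
      rw [sub_eq_zero, eq_comm, mul_eq_right₀ hu.ne_zero]
      exact gI_pow_fin_injective.eq_iff (b := 0)
    rw [repCount_zero_right, if_congr hiff rfl rfl]
    fin_cases j <;> rfl
  sub_gβ_mul_unit j := by
    have hne : u - gβ * (gI ^ (j : ℕ) * u) ≠ 0 := by
      rw [sub_ne_zero]
      intro h
      exact not_gβ_dvd_of_isUnit hu ⟨_, h⟩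
    rw [repCount_zero_right, if_neg hne]
    fin_cases j <;> rfl

lemma of_carry {a b c d : ℕ} (hz : WeightGE z (n + 1)) (hv : IsUnit v)
    (ha : repCount z (n + 1) = a) (hb : repCount (z - gI * v) n = b)
    (hc : repCount (z + v) n = c) (hd : repCount (z - gβ * v) n = d) :
    LastDigitCounts (n + 1) v (v + gβ ^ 3 * z) (carryCounts a b c d) where
  isUnit := hv
  not_dvd := by
    rw [pow_succ', mul_assoc]
    exact not_gβ_dvd_unit_add hv _
  weightGE := hz.unit_add_gβ_pow_three_mul hv
  sub_unit j := by
    rw [repCount_sub_unit hz hv, ha, hb, hc, hd]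
    fin_cases j <;> simp [carryCounts]
  sub_gβ_mul_unit j := by
    rw [repCount_sub_gβ_mul_unit hz hv, hb, hc]
    fin_cases j <;> rfl

lemma step (h : LastDigitCounts n u x s) (k : ℕ) (j : Fin 4) :
    LastDigitCounts (n + 1) (gI ^ (j : ℕ) * u) (gI ^ (j : ℕ) * u + gβ ^ (k + 3) * x)
      (stepCounts (k, j) s) := by
  have hv : IsUnit (gI ^ (j : ℕ) * u) := isUnit_gI_pow_mul h.isUnit j
  have hzero {e : GaussianInt} (he : IsUnit e) (m : ℕ) : repCount (gβ ^ (m + 1) * x + e) n = 0 := by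
    rw [pow_succ', mul_assoc, add_comm]
    exact repCount_unit_add_eq_zero (weightGE_gβ_pow_mul.2 h.weightGE) he
  have hsum (m : ℕ) : repCount (gβ ^ m * x) (n + 1) = (∑ i, s i : ℕ) :=
    (repCount_gβ_pow_mul m x (n + 1)).trans h.repCount_eq
  have hz (m : ℕ) : WeightGE (gβ ^ m * x) (n + 1) := weightGE_gβ_pow_mul.2 h.weightGE
  rw [pow_add, mul_comm (gβ ^ k), mul_assoc]
  rcases k with _ | _ | k
  · rw [pow_zero, one_mul]
    refine of_carry h.weightGE hv h.repCount_eq ?_ ?_ (h.sub_gβ_mul_unit j)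
    · have hone : gI * (gI ^ (j : ℕ) * u) = gI ^ ((j + 1 : Fin 4) : ℕ) * u := by
        rw [gI_pow_fin_add, Fin.val_one, pow_one]; ring
      rw [hone, h.sub_unit]
    · have htwo : gI ^ (j : ℕ) * u = -(gI ^ ((j + 2 : Fin 4) : ℕ) * u) := by
        rw [gI_pow_fin_add, Fin.val_two, pow_two, gI_mul_gI]; ring
      rw [htwo, ← sub_eq_add_neg, h.sub_unit]
  · refine of_carry (hz 1) hv (hsum 1) ?_ (hzero hv 0) ?_
    · rw [sub_eq_add_neg]
      exact hzero (isUnit_gI.mul hv).neg 0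
    · rw [zero_add, pow_one, ← mul_sub, repCount_gβ_mul]
      exact h.sub_unit j
  · refine of_carry (hz _) hv (hsum _) ?_ (hzero hv (k + 1)) ?_
    · rw [sub_eq_add_neg]
      exact hzero (isUnit_gI.mul hv).neg (k + 1)
    · rw [pow_succ', mul_assoc, ← mul_sub, repCount_gβ_mul, sub_eq_add_neg]
      exact hzero hv.neg k

end LastDigitCounts

/-! ### Three-digit non-adjacent forms -/

lemma gNAF_cons {w : ℕ} {d : GaussianInt} {l : List GaussianInt} :
    gNAF w (d :: l) ↔ (d ≠ 0 → ∀ k, k + 1 < w → l.getD k 0 = 0) ∧ gNAF w l := by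
  constructor
  · refine fun h => ⟨fun hd k hk => h 0 (k + 1) k.succ_pos (by omega) hd, fun j k hjk hk hj => ?_⟩
    exact h (j + 1) (k + 1) (by omega) (by omega) hj
  · rintro ⟨hd, hl⟩ (_ | j) (_ | k) hjk hk hj
    · omega
    · exact hd hj k (by omega)
    · omega
    · exact hl j k (by omega) (by omega) hj

lemma gNAF.zeros_append {w : ℕ} {l : List GaussianInt} (h : gNAF w l) (m : ℕ) :
    gNAF w (List.replicate m 0 ++ l) := by
  induction m with
  | zero => exact h
  | succ m ih => exact gNAF_cons.2 ⟨fun h0 => absurd rfl h0, ih⟩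

lemma gIsRep.zeros_append {x : GaussianInt} {l : List GaussianInt} (h : gIsRep x l) (m : ℕ) :
    gIsRep (gβ ^ m * x) (List.replicate m 0 ++ l) := by
  induction m with
  | zero => simpa using h
  | succ m ih => simpa [pow_succ', mul_assoc, List.replicate_succ] using ih.zero_cons

lemma gweight_zeros_append (m : ℕ) (l : List GaussianInt) :
    gweight (List.replicate m 0 ++ l) = gweight l := by
  simp [gweight]

lemma gval_eq_zero_of_gweight_eq_zero {l : List GaussianInt} (h : gweight l = 0) :
    gval l = 0 := by
  rw [gweight_eq_zero_iff] at h
  induction l with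
  | nil => rfl
  | cons d l ih =>
    rw [List.forall_mem_cons] at h
    rw [gval_cons, h.1, ih h.2, mul_zero, add_zero]

/-- The last digit of the 3-NAF encoded by `a` and `W`: its leading digit is `i ^ a`, and `W` has
one entry `(k, j)` per further nonzero digit, last digit first, which says that this digit is
`i ^ j` times the next more significant nonzero digit and separated from it by `k + 2` zeros. -/
def nafLastDigit (a : Fin 4) : List (ℕ × Fin 4) → GaussianInt
  | [] => gI ^ (a : ℕ)
  | (_, j) :: W => gI ^ (j : ℕ) * nafLastDigit a W

/-- The Gaussian integer represented by the 3-NAF encoded by `a` and `W`. -/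
def nafValue (a : Fin 4) : List (ℕ × Fin 4) → GaussianInt
  | [] => gI ^ (a : ℕ)
  | (k, j) :: W => gI ^ (j : ℕ) * nafLastDigit a W + gβ ^ (k + 3) * nafValue a W

/-- The digits of the 3-NAF encoded by `a` and `W`. -/
def nafDigits (a : Fin 4) : List (ℕ × Fin 4) → List GaussianInt
  | [] => [gI ^ (a : ℕ)]
  | (k, j) :: W => gI ^ (j : ℕ) * nafLastDigit a W :: (List.replicate (k + 2) 0 ++ nafDigits a W)

/-- The numbers of optimal representations of `nafValue a W` by last digit, starting from the single
digit `i ^ a`; they do not depend on `a`. -/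
def nafCounts (W : List (ℕ × Fin 4)) : Fin 4 → ℕ := W.foldr stepCounts ![1, 0, 0, 0]

lemma lastDigitCounts_nafValue (a : Fin 4) (W : List (ℕ × Fin 4)) :
    LastDigitCounts W.length (nafLastDigit a W) (nafValue a W) (nafCounts W) := by
  induction W with
  | nil => exact .of_isUnit (isUnit_gI.pow _)
  | cons p W ih => exact ih.step p.1 p.2

lemma isUnit_nafLastDigit (a : Fin 4) (W : List (ℕ × Fin 4)) : IsUnit (nafLastDigit a W) :=
  (lastDigitCounts_nafValue a W).isUnit

lemma not_gβ_dvd_nafValue (a : Fin 4) (W : List (ℕ × Fin 4)) : ¬ gβ ∣ nafValue a W :=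
  (lastDigitCounts_nafValue a W).not_dvd

lemma gIsRep_nafDigits (a : Fin 4) (W : List (ℕ × Fin 4)) :
    gIsRep (nafValue a W) (nafDigits a W) := by
  induction W with
  | nil => exact gIsRep_cons.2 ⟨mem_gD_iff.2 (.inr (isUnit_gI.pow _)), 0, by simp [nafValue],
      gIsRep_nil.2 rfl⟩
  | cons p W ih =>
    obtain ⟨k, j⟩ := p
    rw [nafValue, pow_succ', mul_assoc]
    exact (ih.zeros_append (k + 2)).unit_cons (isUnit_gI_pow_mul (isUnit_nafLastDigit a W) j)

lemma gweight_nafDigits (a : Fin 4) (W : List (ℕ × Fin 4)) :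
    gweight (nafDigits a W) = W.length + 1 := by
  induction W with
  | nil => exact gweight_cons (isUnit_gI.pow _).ne_zero []
  | cons p W ih =>
    have hne : gI ^ (p.2 : ℕ) * nafLastDigit a W ≠ 0 := (isUnit_nafLastDigit a (p :: W)).ne_zero
    rw [nafDigits, gweight_cons hne, gweight_zeros_append, ih, List.length_cons]

lemma gNAF_nafDigits (a : Fin 4) (W : List (ℕ × Fin 4)) : gNAF 3 (nafDigits a W) := by
  induction W with
  | nil => exact gNAF_cons.2 ⟨fun _ _ _ => rfl, fun _ _ _ _ h => absurd rfl h⟩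
  | cons p W ih =>
    refine gNAF_cons.2 ⟨fun _ k hk => ?_, ih.zeros_append _⟩
    obtain rfl | rfl : k = 0 ∨ k = 1 := by omega
    · rfl
    · rfl

theorem gnumOpt_nafValue (a : Fin 4) (W : List (ℕ × Fin 4)) :
    gnumOpt (nafValue a W) = ∑ j, nafCounts W j := by
  have h := lastDigitCounts_nafValue a W
  have hw := gweight_nafDigits a W
  rw [gnumOpt_eq_repCount (hw ▸ h.weightGE) (gIsRep_nafDigits a W), hw, h.repCount_eq,
    ENat.toNat_natCast]

lemma gval_eq_gβ_pow_mul_nafValue {l : List GaussianInt} {n : ℕ} (hl : ∀ d ∈ l, d ∈ gD)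
    (hnaf : gNAF 3 l) (hw : gweight l = n + 1) :
    ∃ k a W, W.length = n ∧ gval l = gβ ^ k * nafValue a W ∧ l.getD k 0 ≠ 0 := by
  induction l generalizing n with
  | nil => exact absurd hw (Nat.succ_ne_zero n).symm
  | cons d l ih =>
    rw [List.forall_mem_cons] at hl
    rw [gNAF_cons] at hnaf
    obtain rfl | hd := mem_gD_iff.1 hl.1
    · obtain ⟨k, a, W, hW, hval, hk⟩ := ih hl.2 hnaf.2 (gweight_zero_cons l ▸ hw)
      exact ⟨k + 1, a, W, hW, by rw [gval_cons, hval, zero_add, pow_succ', mul_assoc], hk⟩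
    rw [gweight_cons hd.ne_zero, Nat.add_right_cancel_iff] at hw
    cases n with
    | zero =>
      obtain ⟨a, rfl⟩ := isUnit_iff_exists_gI_pow.1 hd
      exact ⟨0, a, [], rfl, by simp [gval_cons, gval_eq_zero_of_gweight_eq_zero hw, nafValue],
        hd.ne_zero⟩
    | succ n =>
      obtain ⟨k, a, W, rfl, hval, hk⟩ := ih hl.2 hnaf.2 hw
      have hk2 : 2 ≤ k := by
        by_contra! hlt
        exact hk (hnaf.1 hd.ne_zero k (by omega))
      obtain ⟨m, rfl⟩ := Nat.exists_eq_add_of_le' hk2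
      obtain ⟨j, rfl⟩ := exists_eq_gI_pow_mul (isUnit_nafLastDigit a W) hd
      exact ⟨0, a, (m, j) :: W, rfl, by rw [gval_cons, hval, nafValue]; ring, hd.ne_zero⟩

theorem exists_nafValue_iff {x : GaussianInt} {n : ℕ} :
    (¬ gβ ∣ x ∧ ∃ l, gIsRep x l ∧ gNAF 3 l ∧ gweight l = n + 1) ↔
      ∃ a W, W.length = n ∧ nafValue a W = x := by
  constructor
  · rintro ⟨hx, l, ⟨hl, rfl⟩, hnaf, hw⟩
    obtain ⟨k, a, W, hW, hval, -⟩ := gval_eq_gβ_pow_mul_nafValue hl hnaf hw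
    cases k with
    | zero => exact ⟨a, W, hW, by rw [hval, pow_zero, one_mul]⟩
    | succ k =>
      rw [hval, pow_succ', mul_assoc] at hx
      exact absurd (dvd_mul_right _ _) hx
  · rintro ⟨a, W, rfl, rfl⟩
    exact ⟨not_gβ_dvd_nafValue a W, nafDigits a W, gIsRep_nafDigits a W, gNAF_nafDigits a W,
      gweight_nafDigits a W⟩

lemma nafValue_nil (a : Fin 4) : nafValue a [] = nafLastDigit a [] := rfl

lemma nafValue_cons (a : Fin 4) (p : ℕ × Fin 4) (W : List (ℕ × Fin 4)) :
    nafValue a (p :: W) = nafLastDigit a (p :: W) + gβ ^ (p.1 + 3) * nafValue a W := rfl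

lemma gβ_pow_three_dvd_nafValue_sub (a : Fin 4) (W : List (ℕ × Fin 4)) :
    gβ ^ 3 ∣ nafValue a W - nafLastDigit a W := by
  cases W with
  | nil => rw [nafValue_nil, sub_self]; exact dvd_zero _
  | cons p W =>
    rw [nafValue_cons, add_sub_cancel_left, pow_add, mul_right_comm]
    exact dvd_mul_left _ _

lemma gβ_pow_mul_inj {j k : ℕ} {x y : GaussianInt} (hx : ¬ gβ ∣ x) (hy : ¬ gβ ∣ y)
    (h : gβ ^ j * x = gβ ^ k * y) : j = k ∧ x = y := by
  induction j generalizing k with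
  | zero =>
    cases k with
    | zero => simpa using h
    | succ k =>
      rw [pow_zero, one_mul, pow_succ', mul_assoc] at h
      exact absurd (Dvd.intro _ h.symm) hx
  | succ j ih =>
    cases k with
    | zero =>
      rw [pow_zero, one_mul, pow_succ', mul_assoc] at h
      exact absurd (Dvd.intro _ h) hy
    | succ k =>
      rw [pow_succ', pow_succ', mul_assoc, mul_assoc, mul_right_inj' gβ_ne_zero] at h
      exact (ih h).imp_left (congrArg (· + 1))

lemma nafLastDigit_eq_of_nafValue_eq {a b : Fin 4} {V W : List (ℕ × Fin 4)}
    (h : nafValue a V = nafValue b W) : nafLastDigit a V = nafLastDigit b W := by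
  refine eq_of_gβ_pow_three_dvd_sub (isUnit_nafLastDigit a V) (isUnit_nafLastDigit b W) ?_
  rw [← sub_sub_sub_cancel_left _ _ (nafValue a V)]
  exact dvd_sub (h ▸ gβ_pow_three_dvd_nafValue_sub b W) (gβ_pow_three_dvd_nafValue_sub a V)

lemma gβ_pow_mul_nafValue_ne_zero (k : ℕ) (a : Fin 4) (W : List (ℕ × Fin 4)) :
    gβ ^ k * nafValue a W ≠ 0 :=
  mul_ne_zero (pow_ne_zero k gβ_ne_zero) (lastDigitCounts_nafValue a W).weightGE.ne_zero

theorem nafValue_injective :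
    Function.Injective fun p : Fin 4 × List (ℕ × Fin 4) => nafValue p.1 p.2 := by
  rintro ⟨a, V⟩ ⟨b, W⟩ h
  dsimp only at h
  induction V generalizing W with
  | nil =>
    have hdigit := nafLastDigit_eq_of_nafValue_eq h
    cases W with
    | nil => rw [gI_pow_fin_injective h]
    | cons q W =>
      rw [nafValue_nil, nafValue_cons, hdigit, left_eq_add] at h
      exact absurd h (gβ_pow_mul_nafValue_ne_zero _ b W)
  | cons p V ih =>
    have hdigit := nafLastDigit_eq_of_nafValue_eq h
    cases W with
    | nil =>
      rw [nafValue_nil, nafValue_cons, hdigit, add_eq_left] at h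
      exact absurd h (gβ_pow_mul_nafValue_ne_zero _ a V)
    | cons q W =>
      rw [nafValue_cons, nafValue_cons, hdigit, add_right_inj] at h
      obtain ⟨hk, hval⟩ := gβ_pow_mul_inj (not_gβ_dvd_nafValue a V) (not_gβ_dvd_nafValue b W) h
      obtain ⟨rfl, rfl⟩ := Prod.mk.inj (ih W hval)
      have hj := gI_pow_fin_injective (mul_right_cancel₀ (isUnit_nafLastDigit a V).ne_zero hdigit)
      rw [Prod.ext (Nat.add_right_cancel hk) hj]

/-! ### Maximal counts -/

lemma two_mul_rseq_lt_succ : ∀ m, 2 * rseq (m + 2) < rseq (m + 3)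
  | 0 | 1 | 2 => by decide
  | m + 3 => by
    have h := two_mul_rseq_lt_succ m
    have h' := two_mul_rseq_lt_succ (m + 1)
    have h'' := two_mul_rseq_lt_succ (m + 2)
    simp only [rseq, Nat.add_assoc, Nat.reduceAdd] at *
    omega

/-- The bounds on counts by last digit that propagate along `stepCounts` from weight `m + 4` on,
together with the shape of the counts whose sum is maximal. -/
structure CountBounds (m : ℕ) (s : Fin 4 → ℕ) : Prop where
  sum_le : ∑ i, s i ≤ rseq (m + 4)
  zero_le : s 0 ≤ rseq (m + 3)
  one_le : s 1 ≤ rseq (m + 2)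
  two_le : s 2 ≤ rseq (m + 3)
  three_le : s 3 ≤ rseq (m + 2)
  two_add_one_lt : 2 * (s 2 + s 1) < 2 * rseq (m + 3) + rseq (m + 2)
  two_add_three_lt : 2 * (s 2 + s 3) < 2 * rseq (m + 3) + rseq (m + 2)
  of_sum_eq : ∑ i, s i = rseq (m + 4) →
    s 0 = rseq (m + 3) ∧ (s 3 = rseq (m + 2) ∨ s 1 = rseq (m + 2))

lemma sum_carryCounts (a b c d : ℕ) : ∑ i, carryCounts a b c d i = a + 2 * b + 2 * c + d := by
  simp [carryCounts, Fin.sum_univ_four]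
  ring

lemma countBounds_carryCounts {m a b c d : ℕ} (ha : a ≤ rseq (m + 4))
    (hb : b ≤ rseq (m + 3)) (hc : c ≤ rseq (m + 3))
    (hsum : 2 * b + 2 * c + d ≤ 2 * rseq (m + 3) + 2 * rseq (m + 2))
    (htwo : b + c + d ≤ rseq (m + 4))
    (hbd : 2 * (2 * b + c + d) < 2 * rseq (m + 4) + rseq (m + 3))
    (hcd : 2 * (b + 2 * c + d) < 2 * rseq (m + 4) + rseq (m + 3))
    (heq : 2 * b + 2 * c + d = 2 * rseq (m + 3) + 2 * rseq (m + 2) →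
      c = rseq (m + 3) ∨ b = rseq (m + 3)) :
    CountBounds (m + 1) (carryCounts a b c d) := by
  have hrec : rseq (m + 5) = rseq (m + 4) + 2 * rseq (m + 3) + 2 * rseq (m + 2) := rfl
  refine ⟨?_, ha, hb, htwo, hc, ?_, ?_, ?_⟩
  · rw [sum_carryCounts]
    change _ ≤ rseq (m + 5)
    omega
  · change 2 * (b + c + d + b) < 2 * rseq (m + 4) + rseq (m + 3)
    omega
  · change 2 * (b + c + d + c) < 2 * rseq (m + 4) + rseq (m + 3)
    omega
  · rw [sum_carryCounts]
    change _ = rseq (m + 5) → a = rseq (m + 4) ∧ (c = rseq (m + 3) ∨ b = rseq (m + 3))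
    omega

lemma CountBounds.step {m : ℕ} {s : Fin 4 → ℕ} (h : CountBounds m s) (p : ℕ × Fin 4) :
    CountBounds (m + 1) (stepCounts p s) := by
  have hlt := two_mul_rseq_lt_succ m
  have hlt' : 2 * rseq (m + 3) < rseq (m + 4) := two_mul_rseq_lt_succ (m + 1)
  obtain ⟨hsum, h0, h1, h2, h3, h21, h23, -⟩ := h
  match p with
  | (0, 0) => apply countBounds_carryCounts (b := s 1) (c := s 2) (d := s 1) <;> omega
  | (0, 1) => apply countBounds_carryCounts (b := s 2) (c := s 3) (d := s 3) <;> omega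
  | (0, 2) => apply countBounds_carryCounts (b := s 3) (c := s 0) (d := 0) <;> omega
  | (0, 3) => apply countBounds_carryCounts (b := s 0) (c := s 1) (d := 0) <;> omega
  | (1, j) =>
    have hj : s j ≤ rseq (m + 3) := by
      fin_cases j <;> dsimp <;> omega
    apply countBounds_carryCounts (b := 0) (c := 0) (d := s j) <;> omega
  | (_ + 2, _) => apply countBounds_carryCounts (b := 0) (c := 0) (d := 0) <;> omega

/-- The counts `s` sum to `rseq (m + 4)`, and the one of `s 3` (for `b = 0`) or `s 1` (for `b = 1`)
that decides whether this persists under `stepCounts` has its largest possible value. -/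
def MaximalCounts (m : ℕ) (b : Fin 4) (s : Fin 4 → ℕ) : Prop :=
  ∑ i, s i = rseq (m + 4) ∧ s (3 + 2 * b) = rseq (m + 2)

lemma CountBounds.sum_eq_iff {m : ℕ} {s : Fin 4 → ℕ} (h : CountBounds m s) :
    ∑ i, s i = rseq (m + 4) ↔ ∃ b ∈ ({0, 1} : Finset (Fin 4)), MaximalCounts m b s := by
  constructor
  · intro hs
    obtain ⟨-, h3 | h1⟩ := h.of_sum_eq hs
    · exact ⟨0, by simp, hs, h3⟩
    · exact ⟨1, by simp, hs, h1⟩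
  · rintro ⟨b, -, hs, -⟩
    exact hs

lemma CountBounds.maximalCounts_step_iff {m : ℕ} {s : Fin 4 → ℕ} (h : CountBounds m s) {b : Fin 4}
    (hb : b ∈ ({0, 1} : Finset (Fin 4))) (p : ℕ × Fin 4) :
    MaximalCounts (m + 1) b (stepCounts p s) ↔ p = (0, b + 2) ∧ MaximalCounts m b s := by
  have hlt := two_mul_rseq_lt_succ m
  have hrec : rseq (m + 5) = rseq (m + 4) + 2 * rseq (m + 3) + 2 * rseq (m + 2) := rfl
  have hshape := h.of_sum_eq
  obtain ⟨hsum, h0, h1, -, h3, h21, h23, -⟩ := h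
  simp only [Finset.mem_insert, Finset.mem_singleton] at hb
  -- The counts after a step sum to `3 * s 0 + s 1 + s 2 + 3 * s 3` for `p = (0, 2)`, to
  -- `3 * s 0 + 3 * s 1 + s 2 + s 3` for `p = (0, 3)`, and to less than `rseq (m + 5)` otherwise.
  obtain rfl | rfl := hb <;> obtain ⟨_ | _ | _, j⟩ := p <;> fin_cases j <;>
    simp only [MaximalCounts, stepCounts, sum_carryCounts] <;>
    simp [carryCounts, secondCounts, Nat.add_assoc] <;> omega

lemma nafCounts_cons (p : ℕ × Fin 4) (W : List (ℕ × Fin 4)) :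
    nafCounts (p :: W) = stepCounts p (nafCounts W) := rfl

lemma nafCounts_singleton (p : ℕ × Fin 4) :
    nafCounts [p] 0 = 1 ∧ nafCounts [p] 1 + nafCounts [p] 3 ≤ nafCounts [p] 2 ∧
      nafCounts [p] 2 ≤ 1 ∧ (nafCounts [p] 1 = 1 ↔ p = (0, 3)) ∧
      (nafCounts [p] 3 = 1 ↔ p = (0, 2)) := by
  obtain ⟨_ | _ | _, j⟩ := p <;> fin_cases j <;>
    simp [nafCounts, stepCounts, carryCounts, secondCounts, Fin.sum_univ_four]

/-- The words of length two with the largest number of optimal representations. -/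
def maximalPairs : Finset (List (ℕ × Fin 4)) := {[(0, 0), (0, 3)], [(0, 1), (0, 2)]}

lemma sum_nafCounts_pair_eq_iff (q p : ℕ × Fin 4) :
    ∑ i, nafCounts [q, p] i = 8 ↔ [q, p] ∈ maximalPairs := by
  obtain ⟨h0, h13, h2, h1, h3⟩ := nafCounts_singleton p
  have hmem : [q, p] ∈ maximalPairs ↔
      q = (0, 0) ∧ nafCounts [p] 1 = 1 ∨ q = (0, 1) ∧ nafCounts [p] 3 = 1 := by
    simp [maximalPairs, h1, h3]
  rw [hmem, nafCounts_cons]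
  obtain ⟨_ | _ | _, j⟩ := q <;> fin_cases j <;>
    simp [stepCounts, carryCounts, secondCounts, Fin.sum_univ_four] <;> omega

lemma nafCounts_pair_le (q p : ℕ × Fin 4) : nafCounts [q, p] ≤ ![3, 1, 3, 1] := by
  obtain ⟨h0, h13, h2, -⟩ := nafCounts_singleton p
  rw [nafCounts_cons]
  intro i
  obtain ⟨_ | _ | _, j⟩ := q <;> fin_cases j <;> fin_cases i <;>
    simp [stepCounts, carryCounts, secondCounts, Fin.sum_univ_four] <;> omega

lemma countBounds_stepCounts_of_le {s : Fin 4 → ℕ} (hs : s ≤ ![3, 1, 3, 1]) (p : ℕ × Fin 4) :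
    CountBounds 0 (stepCounts p s) := by
  have h0 : s 0 ≤ 3 := hs 0
  have h1 : s 1 ≤ 1 := hs 1
  have h2 : s 2 ≤ 3 := hs 2
  have h3 : s 3 ≤ 1 := hs 3
  obtain ⟨_ | _ | _, j⟩ := p <;> fin_cases j <;> constructor <;>
    simp [stepCounts, carryCounts, secondCounts, Fin.sum_univ_four, rseq] <;> omega

lemma maximalCounts_zero_stepCounts_iff {s : Fin 4 → ℕ} (hs : s ≤ ![3, 1, 3, 1]) {b : Fin 4}
    (hb : b ∈ ({0, 1} : Finset (Fin 4))) (p : ℕ × Fin 4) :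
    MaximalCounts 0 b (stepCounts p s) ↔ p = (0, b) ∧ ∑ i, s i = 8 := by
  have h0 : s 0 ≤ 3 := hs 0
  have h1 : s 1 ≤ 1 := hs 1
  have h2 : s 2 ≤ 3 := hs 2
  have h3 : s 3 ≤ 1 := hs 3
  simp only [Finset.mem_insert, Finset.mem_singleton] at hb
  obtain rfl | rfl := hb <;> obtain ⟨_ | _ | _, j⟩ := p <;> fin_cases j <;>
    simp [MaximalCounts, stepCounts, carryCounts, secondCounts, Fin.sum_univ_four, rseq] <;> omega

/-- The words of length `m + 3` with the largest number of optimal representations. From the fourth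
nonzero digit on, the ratio of consecutive digits is constantly `-1` (for `b = 0`) or `-i` (for
`b = 1`). -/
def maximalWords (m : ℕ) : Finset (List (ℕ × Fin 4)) :=
  (({0, 1} : Finset (Fin 4)) ×ˢ maximalPairs).image fun p =>
    List.replicate m (0, p.1 + 2) ++ (0, p.1) :: p.2

lemma card_maximalWords (m : ℕ) : (maximalWords m).card = 4 := by
  rw [maximalWords, Finset.card_image_of_injective, Finset.card_product]
  · decide
  · rintro ⟨b, P⟩ ⟨b', P'⟩ h
    have h' := List.append_inj_right h (by simp)
    simpa using h'

lemma countBounds_nafCounts {m : ℕ} {W : List (ℕ × Fin 4)} (hW : W.length = m + 3) :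
    CountBounds m (nafCounts W) := by
  induction m generalizing W with
  | zero =>
    obtain ⟨p, q, r, rfl⟩ := List.length_eq_three.1 hW
    exact countBounds_stepCounts_of_le (nafCounts_pair_le q r) p
  | succ m ih =>
    obtain ⟨p, V, rfl⟩ := List.exists_cons_of_length_eq_add_one hW
    exact (ih (Nat.succ.inj hW)).step p

lemma maximalCounts_nafCounts_iff {m : ℕ} {W : List (ℕ × Fin 4)} (hW : W.length = m + 3)
    {b : Fin 4} (hb : b ∈ ({0, 1} : Finset (Fin 4))) :
    MaximalCounts m b (nafCounts W) ↔
      ∃ P ∈ maximalPairs, List.replicate m (0, b + 2) ++ (0, b) :: P = W := by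
  induction m generalizing W with
  | zero =>
    obtain ⟨p, q, r, rfl⟩ := List.length_eq_three.1 hW
    rw [nafCounts_cons, maximalCounts_zero_stepCounts_iff (nafCounts_pair_le q r) hb,
      sum_nafCounts_pair_eq_iff]
    simp [eq_comm, and_comm]
  | succ m ih =>
    obtain ⟨p, V, rfl⟩ := List.exists_cons_of_length_eq_add_one hW
    have hV : V.length = m + 3 := Nat.succ.inj hW
    rw [nafCounts_cons, (countBounds_nafCounts hV).maximalCounts_step_iff hb, ih hV]
    constructor
    · rintro ⟨rfl, P, hP, rfl⟩
      exact ⟨P, hP, rfl⟩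
    · rintro ⟨P, hP, h⟩
      obtain ⟨rfl, rfl⟩ := List.cons.inj h
      exact ⟨rfl, P, hP, rfl⟩

theorem sum_nafCounts_eq_rseq_iff {m : ℕ} {W : List (ℕ × Fin 4)} (hW : W.length = m + 3) :
    ∑ i, nafCounts W i = rseq (m + 4) ↔ W ∈ maximalWords m := by
  have h (b : Fin 4) : b ∈ ({0, 1} : Finset (Fin 4)) ∧ MaximalCounts m b (nafCounts W) ↔
      b ∈ ({0, 1} : Finset (Fin 4)) ∧
        ∃ P ∈ maximalPairs, List.replicate m (0, b + 2) ++ (0, b) :: P = W :=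
    and_congr_right fun hb => maximalCounts_nafCounts_iff hW hb
  simp only [(countBounds_nafCounts hW).sum_eq_iff, h, maximalWords, Finset.mem_image,
    Finset.mem_product, Prod.exists, and_assoc, exists_and_left]

lemma length_of_mem_maximalWords {m : ℕ} {W : List (ℕ × Fin 4)} (hW : W ∈ maximalWords m) :
    W.length = m + 3 := by
  obtain ⟨⟨b, P⟩, hP, rfl⟩ := Finset.mem_image.1 hW
  obtain rfl | rfl : P = [(0, 0), (0, 3)] ∨ P = [(0, 1), (0, 2)] := by
    simpa [maximalPairs] using (Finset.mem_product.1 hP).2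
  all_goals simp

theorem gnumOpt_eq_rseq_iff_exists_maximalWords {x : GaussianInt} {m : ℕ} :
    (¬ gβ ∣ x ∧ (∃ l, gIsRep x l ∧ gNAF 3 l ∧ gweight l = m + 4) ∧ gnumOpt x = rseq (m + 4)) ↔
      ∃ a, ∃ W ∈ maximalWords m, nafValue a W = x := by
  rw [← and_assoc, exists_nafValue_iff]
  constructor
  · rintro ⟨⟨a, W, hW, rfl⟩, hx⟩
    rw [gnumOpt_nafValue] at hx
    exact ⟨a, W, (sum_nafCounts_eq_rseq_iff hW).1 hx, rfl⟩
  · rintro ⟨a, W, hW, rfl⟩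
    have hlen := length_of_mem_maximalWords hW
    exact ⟨⟨a, W, hlen, rfl⟩,
      (gnumOpt_nafValue a W).trans ((sum_nafCounts_eq_rseq_iff hlen).2 hW)⟩

/-- For `N ≥ 4` there are exactly 16 Gaussian integers `x` not divisible by
`β` whose 3-NAF representation has exactly `N` nonzero digits and which
attain `r_N` optimal representations. -/
theorem stmt9 (N : ℕ) (hN : 4 ≤ N) :
    {x : GaussianInt | ¬ gβ ∣ x ∧
      (∃ l : List GaussianInt, gIsRep x l ∧ gNAF 3 l ∧ gweight l = N) ∧
      gnumOpt x = rseq N}.ncard = 16 := by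
  obtain ⟨m, rfl⟩ := Nat.exists_eq_add_of_le' hN
  let words : Finset (Fin 4 × List (ℕ × Fin 4)) := Finset.univ ×ˢ maximalWords m
  calc
    _ = ((fun p : Fin 4 × List (ℕ × Fin 4) => nafValue p.1 p.2) '' words).ncard := by
      congr 1
      ext x
      simp [words, gnumOpt_eq_rseq_iff_exists_maximalWords]
    _ = words.card := by
      rw [Set.ncard_image_of_injective _ nafValue_injective, Set.ncard_coe_finset]
    _ = 16 := by
      rw [Finset.card_product, Finset.card_univ, Fintype.card_fin, card_maximalWords]
end
end

section
/- Define row vectors t_m ∈ ℤ^{1×9} by t_4 = e A_1 A_{−1} A_{−i} A_{−i} R³ and t_{m+1} = t_m A_1 R² for m ≥ 4. Then for every m ≥ 5, t_m = (r_m, r_{m−2} + r_{m−3}, r_{m−2}, r_{m−1}, r_{m−3}, r_{m−2}, 0, 0, r_{m−3}), where (r_N) is defined by r_0 = r_1 = 1, r_2 = 3, r_3 = 8, r_4 = 17 and r_{N+3} = r_{N+2} + 2 r_{N+1} + 2 r_N for N ≥ 2. -/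
/-!
Since `R⁴ = 1` and `Rᵀ = R⁻¹`, the matrices `A_i`, `A_{-1}`, `A_{-i}` are conjugates of `A_1` by
powers of `R`, so `t_4` is obtained from `e` by applying only `A_1` and the coordinate permutation
`R`.

On the rows `(a, c + d, c, b, d, c, 0, 0, d)` the matrix `A_1 R²` acts as the shift
`(a, b, c, d) ↦ (a + 2b + 2c, a, b, c)`, which is one step of the recurrence of `r`. The row
`t_4 = (17, 5, 3, 8, 1, 3, 0, 0, 1)` is not of this form, but `t_5` is, with
`(a, b, c, d) = (r_5, r_4, r_3, r_2)`.
-/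

open Matrix

noncomputable section

/-- The row vector `e = (1,0,0,0,0,0,0,0,0)`. -/
def e9 : Matrix (Fin 1) (Fin 9) ℤ := !![1,0,0,0,0,0,0,0,0]

/-- The permutation matrix `R = diag(1, P1, P1)`. -/
def R9 : Matrix (Fin 9) (Fin 9) ℤ :=
  !![1,0,0,0,0,0,0,0,0;
     0,0,1,0,0,0,0,0,0;
     0,0,0,1,0,0,0,0,0;
     0,0,0,0,1,0,0,0,0;
     0,1,0,0,0,0,0,0,0;
     0,0,0,0,0,0,1,0,0;
     0,0,0,0,0,0,0,1,0;
     0,0,0,0,0,0,0,0,1;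
     0,0,0,0,0,1,0,0,0]

/-- The matrix `A_1`. -/
def A1 : Matrix (Fin 9) (Fin 9) ℤ :=
  !![1,1,0,0,0,0,0,0,0;
     0,0,0,0,0,0,0,0,0;
     2,0,1,1,0,0,1,0,0;
     2,0,0,1,1,0,0,1,0;
     0,0,0,0,0,0,0,0,0;
     0,0,0,0,0,0,0,0,0;
     1,0,0,1,0,0,0,0,0;
     0,0,0,0,0,0,0,0,0;
     0,0,0,0,0,0,0,0,0]

/-- The matrix `A_0`. -/
def A0 : Matrix (Fin 9) (Fin 9) ℤ :=
  !![1,0,0,0,0,0,0,0,0;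
     0,0,0,0,0,0,1,0,0;
     0,0,0,0,0,0,0,1,0;
     0,0,0,0,0,0,0,0,1;
     0,0,0,0,0,1,0,0,0;
     0,0,0,0,0,0,0,0,0;
     0,0,0,0,0,0,0,0,0;
     0,0,0,0,0,0,0,0,0;
     0,0,0,0,0,0,0,0,0]

/-- The matrix `A_i = Rᵀ A_1 R`. -/
def Ai : Matrix (Fin 9) (Fin 9) ℤ := R9ᵀ * A1 * R9

/-- The matrix `A_{-1} = Rᵀ A_i R`. -/
def Am1 : Matrix (Fin 9) (Fin 9) ℤ := R9ᵀ * Ai * R9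

/-- The matrix `A_{-i} = Rᵀ A_{-1} R`. -/
def Ami : Matrix (Fin 9) (Fin 9) ℤ := R9ᵀ * Am1 * R9

/-- The matrix `A_d` associated with a digit `d ∈ D`. -/
def Amat (d : GaussianInt) : Matrix (Fin 9) (Fin 9) ℤ :=
  if d = 0 then A0
  else if d = 1 then A1
  else if d = gI then Ai
  else if d = -1 then Am1
  else Ami

/-- The row vectors `t_m` for `m ≥ 4`: `t_4 = e A_1 A_{-1} A_{-i} A_{-i} R³`
and `t_{m+1} = t_m A_1 R²`. -/
def tvec (m : ℕ) : Matrix (Fin 1) (Fin 9) ℤ :=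
  e9 * (A1 * Am1 * Ami * Ami * R9 ^ 3) * (A1 * R9 ^ 2) ^ (m - 4)

/-- The coordinate permutation of which `R` is the permutation matrix: right multiplication by `R`
turns a row `x` into `x ∘ coordPerm`, so the cycles run in the direction opposite to `P1`. -/
def coordPerm : Equiv.Perm (Fin 9) := c[4, 3, 2, 1] * c[8, 7, 6, 5]

lemma coordPerm_pow_four : coordPerm ^ 4 = 1 := by
  decide +kernel

lemma permMatrixHom_coordPerm : Matrix.permMatrixHom coordPerm = R9 := by
  ext i j
  fin_cases i <;> fin_cases j <;> rfl

lemma R9_pow_four : R9 ^ 4 = 1 := by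
  rw [← permMatrixHom_coordPerm, ← map_pow, coordPerm_pow_four, map_one]

lemma R9_transpose : R9ᵀ = R9 ^ 3 := by
  have inv_eq_pow : coordPerm⁻¹ = coordPerm ^ 3 :=
    inv_eq_of_mul_eq_one_right (by rw [← pow_succ', coordPerm_pow_four])
  rw [← permMatrixHom_coordPerm, ← map_pow, ← inv_eq_pow, Matrix.permMatrixHom_apply,
    Matrix.permMatrixHom_apply, Matrix.transpose_permMatrix]

lemma Am1_eq_conj : Am1 = R9 ^ 2 * A1 * R9 ^ 2 := by
  calc Am1 = R9 ^ 4 * R9 ^ 2 * A1 * R9 ^ 2 := by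
        rw [Am1, Ai, R9_transpose]; noncomm_ring
    _ = R9 ^ 2 * A1 * R9 ^ 2 := by rw [R9_pow_four, Matrix.one_mul]

lemma Ami_eq_conj : Ami = R9 * A1 * R9 ^ 3 := by
  calc Ami = R9 ^ 4 * R9 * A1 * R9 ^ 3 := by
        rw [Ami, Am1_eq_conj, R9_transpose]; noncomm_ring
    _ = R9 * A1 * R9 ^ 3 := by rw [R9_pow_four, Matrix.one_mul]

lemma A1_mul_Am1_mul_Ami_mul_Ami_mul_R9_pow_three :
    A1 * Am1 * Ami * Ami * R9 ^ 3 = A1 * R9 ^ 2 * (A1 * R9 ^ 2) * R9 * A1 * (A1 * R9 ^ 2) := by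
  calc A1 * Am1 * Ami * Ami * R9 ^ 3
      = A1 * R9 ^ 2 * (A1 * R9 ^ 2) * R9 * A1 * R9 ^ 4 * (A1 * R9 ^ 2) * R9 ^ 4 := by
        rw [Am1_eq_conj, Ami_eq_conj]; noncomm_ring
    _ = A1 * R9 ^ 2 * (A1 * R9 ^ 2) * R9 * A1 * (A1 * R9 ^ 2) := by
        rw [R9_pow_four, Matrix.mul_one, Matrix.mul_one]

section Row

variable (x₀ x₁ x₂ x₃ x₄ x₅ x₆ x₇ x₈ : ℤ)

lemma row_mul_R9 :
    !![x₀, x₁, x₂, x₃, x₄, x₅, x₆, x₇, x₈] * R9 =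
      !![x₀, x₄, x₁, x₂, x₃, x₈, x₅, x₆, x₇] := by
  ext i j
  fin_cases i
  fin_cases j <;> simp [R9, Matrix.mul_apply, Fin.sum_univ_succ]

lemma row_mul_A1 :
    !![x₀, x₁, x₂, x₃, x₄, x₅, x₆, x₇, x₈] * A1 =
      !![x₀ + 2 * x₂ + 2 * x₃ + x₆, x₀, x₂, x₂ + x₃ + x₆, x₃, 0, x₂, x₃, 0] := by
  ext i j
  fin_cases i
  fin_cases j <;> simp [A1, Matrix.mul_apply, Fin.sum_univ_succ] <;> ring

lemma row_mul_A1_mul_R9_sq :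
    !![x₀, x₁, x₂, x₃, x₄, x₅, x₆, x₇, x₈] * (A1 * R9 ^ 2) =
      !![x₀ + 2 * x₂ + 2 * x₃ + x₆, x₂ + x₃ + x₆, x₃, x₀, x₂, x₃, 0, 0, x₂] := by
  rw [pow_two, ← Matrix.mul_assoc, ← Matrix.mul_assoc, row_mul_A1, row_mul_R9, row_mul_R9]

end Row

/-- The common shape of the rows `t_m`, `m ≥ 5`, encoding the state `(a, b, c, d)` of the recurrence
`r_{N+3} = r_{N+2} + 2 r_{N+1} + 2 r_N`: four consecutive terms, the latest one first. -/
def recurrenceRow (a b c d : ℤ) : Matrix (Fin 1) (Fin 9) ℤ :=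
  !![a, c + d, c, b, d, c, 0, 0, d]

lemma recurrenceRow_mul_A1_mul_R9_sq (a b c d : ℤ) :
    recurrenceRow a b c d * (A1 * R9 ^ 2) = recurrenceRow (a + 2 * b + 2 * c) a b c := by
  rw [recurrenceRow, row_mul_A1_mul_R9_sq, recurrenceRow]
  ring_nf

lemma tvec_succ {m : ℕ} (hm : 4 ≤ m) : tvec (m + 1) = tvec m * (A1 * R9 ^ 2) := by
  rw [tvec, tvec, Nat.sub_add_comm hm, pow_succ _ (m - 4), ← Matrix.mul_assoc]

lemma tvec_four : tvec 4 = !![17, 5, 3, 8, 1, 3, 0, 0, 1] := by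
  calc tvec 4 = e9 * (A1 * R9 ^ 2) * (A1 * R9 ^ 2) * R9 * A1 * (A1 * R9 ^ 2) := by
        rw [tvec, A1_mul_Am1_mul_Ami_mul_Ami_mul_R9_pow_three]
        simp only [Nat.sub_self, pow_zero, Matrix.mul_one, Matrix.mul_assoc]
    _ = !![17, 5, 3, 8, 1, 3, 0, 0, 1] := by
        simp only [e9, row_mul_A1_mul_R9_sq, row_mul_R9, row_mul_A1]
        norm_num

lemma tvec_five : tvec 5 = recurrenceRow (rseq 5) (rseq 4) (rseq 3) (rseq 2) := by
  rw [tvec_succ le_rfl, tvec_four, row_mul_A1_mul_R9_sq]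
  simp [recurrenceRow, rseq]

lemma tvec_add_five (n : ℕ) :
    tvec (n + 5) =
      recurrenceRow (rseq (n + 5)) (rseq (n + 4)) (rseq (n + 3)) (rseq (n + 2)) := by
  induction n with
  | zero => exact tvec_five
  | succ n ih =>
    have recurrence : (rseq (n + 6) : ℤ) =
        rseq (n + 5) + 2 * rseq (n + 4) + 2 * rseq (n + 3) := by
      rw [rseq]; push_cast; rfl
    calc tvec (n + 6) = tvec (n + 5) * (A1 * R9 ^ 2) := tvec_succ (by lia)
      _ = recurrenceRow (rseq (n + 6)) (rseq (n + 5)) (rseq (n + 4)) (rseq (n + 3)) := by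
        rw [ih, recurrenceRow_mul_A1_mul_R9_sq, recurrence]

/-- Explicit form of the vectors `t_m` for `m ≥ 5`. -/
theorem stmt11 (m : ℕ) (hm : 5 ≤ m) :
    tvec m =
      !![(rseq m : ℤ), (rseq (m - 2) : ℤ) + (rseq (m - 3) : ℤ),
         (rseq (m - 2) : ℤ), (rseq (m - 1) : ℤ), (rseq (m - 3) : ℤ),
         (rseq (m - 2) : ℤ), 0, 0, (rseq (m - 3) : ℤ)] := by
  obtain ⟨n, rfl⟩ := Nat.exists_eq_add_of_le' hm
  exact tvec_add_five n
end
end
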